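/- arXiv:1603.08605 — 2 statements merged into one kernel-verified Lean document; each statement's English description precedes it below -/
import Mathlib

section
/- (Measurable Choice Theorem) Let (T, 𝒯, μ) be a σ-finite measure space, let S be a standard Borel space, and let G be a measurable subset of T × S (with the product σ-algebra) whose projection onto T is all of T. Then there exists a measurable function g : T → S such that (t, g(t)) ∈ G for μ-almost every t ∈ T. -/
open MeasureTheory

/-! Mapping `T` into the Cantor space by countably many measurable sets that determine `G`, and
embedding `S` in `ℝ`, reduces the claim to an analytic set `G ⊆ X × ℝ` over a Polish space `X`
carrying a finite Borel measure. Over the projection of a compact set, the infimum of each fiber is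
a measurable selection. By Choquet's capacitability argument the projection of an analytic set is
exhausted, up to a null set, by the projections of countably many of its compact subsets, and the
selections over these are glued.
-/

open Set Topology

section FactorThroughCantor

theorem exists_seq_measurableSet_generateFrom_range {α : Type*} {C : Set (Set α)}
    (hC : C.Nonempty) {s : Set α} (hs : MeasurableSet[MeasurableSpace.generateFrom C] s) :
    ∃ f : ℕ → Set α, (∀ n, f n ∈ C) ∧
      MeasurableSet[MeasurableSpace.generateFrom (range f)] s := by
  induction s, hs using MeasurableSpace.generateFrom_induction with
  | hC t ht _ =>
    exact ⟨fun _ => t, fun _ => ht, MeasurableSpace.measurableSet_generateFrom ⟨0, rfl⟩⟩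
  | empty => exact ⟨fun _ => hC.some, fun _ => hC.some_mem, @MeasurableSet.empty _ (_)⟩
  | compl t _ ih =>
    obtain ⟨f, hfC, ht⟩ := ih
    exact ⟨f, hfC, ht.compl⟩
  | iUnion s _ ih =>
    choose f hfC hs using ih
    refine ⟨fun k => f k.unpair.1 k.unpair.2, fun k => hfC _ _, MeasurableSet.iUnion fun n => ?_⟩
    refine MeasurableSpace.generateFrom_mono (range_subset_iff.2 fun m => ?_) _ (hs n)
    exact ⟨Nat.pair n m, by simp only [Nat.unpair_pair]⟩

theorem exists_measurable_nat_bool_preimage_prodMap_eq {T S : Type*} [MeasurableSpace T]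
    [MeasurableSpace S] {G : Set (T × S)} (hG : MeasurableSet G) :
    ∃ φ : T → ℕ → Bool, Measurable φ ∧
      ∃ G' : Set ((ℕ → Bool) × S), MeasurableSet G' ∧ Prod.map φ id ⁻¹' G' = G := by
  classical
  rw [← generateFrom_prod] at hG
  obtain ⟨R, hR, hGR⟩ := exists_seq_measurableSet_generateFrom_range
    (image2_nonempty_iff.2 ⟨⟨∅, MeasurableSet.empty⟩, ∅, MeasurableSet.empty⟩) hG
  choose A hA B hB hAB using hR
  let φ : T → ℕ → Bool := fun t n => decide (t ∈ A n)
  refine ⟨φ, measurable_pi_lambda _ fun n => measurable_to_bool ?_, ?_⟩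
  · have hφA : (fun t => φ t n) ⁻¹' {true} = A n := by ext t; simp [φ]
    exact hφA ▸ hA n
  · suffices MeasurableSpace.generateFrom (range R) ≤
        MeasurableSpace.comap (Prod.map φ id) inferInstance from this G hGR
    refine MeasurableSpace.generateFrom_le ?_
    rintro _ ⟨n, rfl⟩
    have hcoord : Measurable fun q : (ℕ → Bool) × S => q.1 n := by fun_prop
    refine ⟨{q | q.1 n = true} ∩ {q | q.2 ∈ B n},
      (hcoord (measurableSet_singleton true)).inter (measurable_snd (hB n)), ?_⟩
    ext q
    simp [← hAB, φ]

end FactorThroughCantor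

section Capacitability

theorem exists_finset_forall_mem_of_isCompact_of_isOpen {ι : Type*} {A : ι → Type*}
    [∀ i, TopologicalSpace (A i)] {K V : Set (∀ i, A i)} (hK : IsCompact K) (hV : IsOpen V)
    (hKV : K ⊆ V) : ∃ I : Finset ι, ∀ z ∈ K, ∀ y, (∀ i ∈ I, y i = z i) → y ∈ V := by
  classical
  refine hK.induction_on (p := fun s => ∃ I : Finset ι, ∀ z ∈ s, ∀ y, (∀ i ∈ I, y i = z i) → y ∈ V)
    ⟨∅, fun _ h => h.elim⟩ ?_ ?_ fun z hz => ?_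
  · rintro s t hst ⟨I, hI⟩
    exact ⟨I, fun z hz => hI z (hst hz)⟩
  · rintro s t ⟨I, hI⟩ ⟨J, hJ⟩
    refine ⟨I ∪ J, ?_⟩
    rintro z (hz | hz) y hyz
    · exact hI z hz y fun i hi => hyz i (Finset.mem_union_left J hi)
    · exact hJ z hz y fun i hi => hyz i (Finset.mem_union_right I hi)
  · obtain ⟨I, u, hu, hIV⟩ := isOpen_pi_iff.1 hV z (hKV hz)
    refine ⟨(I : Set ι).pi u, mem_nhdsWithin_of_mem_nhds <|
      set_pi_mem_nhds I.finite_toSet fun i hi => (hu i hi).1.mem_nhds (hu i hi).2, I, ?_⟩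
    exact fun w hw y hyw => hIV fun i hi => hyw i hi ▸ hw i hi

theorem isCompact_Iic_of_orderBot {α : Type*} [TopologicalSpace α] [Preorder α] [OrderBot α]
    [CompactIccSpace α] (a : α) : IsCompact (Iic a) := by
  rw [← Icc_bot]
  exact isCompact_Icc

theorem exists_setOf_forall_lt_le_subset_of_isOpen {b : ℕ → ℕ} {V : Set (ℕ → ℕ)} (hV : IsOpen V)
    (hbV : Iic b ⊆ V) : ∃ n, {x : ℕ → ℕ | ∀ i < n, x i ≤ b i} ⊆ V := by
  obtain ⟨I, hI⟩ :=
    exists_finset_forall_mem_of_isCompact_of_isOpen (isCompact_Iic_of_orderBot b) hV hbV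
  obtain ⟨n, hn⟩ := I.exists_nat_subset_range
  refine ⟨n, fun x hx => hI (x ⊓ b) (mem_Iic.2 inf_le_right) x fun i hi => ?_⟩
  exact (min_eq_left (hx i (Finset.mem_range.1 (hn hi)))).symm

variable {X : Type*} [MeasurableSpace X] {ν : Measure X}

theorem exists_lt_measure_image_inter_setOf_le {α : Type*} {p : α → X} {s : Set α}
    {c : ENNReal} (hc : c < ν (p '' s)) (f : α → ℕ) :
    ∃ j, c < ν (p '' (s ∩ {x | f x ≤ j})) := by
  have hmono : Monotone fun j => p '' (s ∩ {x | f x ≤ j}) := fun i j hij =>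
    image_mono (inter_subset_inter_right s fun x (hx : f x ≤ i) => hx.trans hij)
  have hunion : ⋃ j, {x | f x ≤ j} = univ := iUnion_eq_univ_iff.2 fun x => ⟨f x, le_refl (f x)⟩
  rwa [← inter_univ s, ← hunion, inter_iUnion, image_iUnion, hmono.measure_iUnion,
    lt_iSup_iff] at hc

theorem exists_forall_lt_measure_image_setOf_forall_lt_le {p : (ℕ → ℕ) → X} {c : ENNReal}
    (hc : c < ν (range p)) :
    ∃ b : ℕ → ℕ, ∀ n, c < ν (p '' {x | ∀ i < n, x i ≤ b i}) := by
  have hstep (n : ℕ) (s : Set (ℕ → ℕ)) :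
      ∃ j, c < ν (p '' s) → c < ν (p '' (s ∩ {x | x n ≤ j})) := by
    by_cases hs : c < ν (p '' s)
    · exact (exists_lt_measure_image_inter_setOf_le hs fun x => x n).imp fun _ h _ => h
    · exact ⟨0, fun h => absurd h hs⟩
  choose j hj using hstep
  let s : ℕ → Set (ℕ → ℕ) := fun n => Nat.rec univ (fun n s => s ∩ {x | x n ≤ j n s}) n
  have hs (n : ℕ) : s n = {x | ∀ i < n, x i ≤ j i (s i)} := by
    induction n with
    | zero => simp [s]
    | succ n ih =>
      change s n ∩ {x | x n ≤ j n (s n)} = _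
      ext x
      rw [mem_inter_iff, mem_ofPred_eq, mem_ofPred_eq, Nat.forall_lt_succ_right, ih, mem_ofPred_eq]
  refine ⟨fun n => j n (s n), fun n => hs n ▸ ?_⟩
  induction n with
  | zero => rwa [← image_univ] at hc
  | succ n ih => exact hj n (s n) ih

variable [TopologicalSpace X] {Z : Type*} [TopologicalSpace Z] {G : Set Z} {π : Z → X}

theorem exists_isCompact_le_measure_image_of_lt [ν.OuterRegular] {p : (ℕ → ℕ) → X}
    (hp : Continuous p) {c : ENNReal} (hc : c < ν (range p)) :
    ∃ K, IsCompact K ∧ c ≤ ν (p '' K) := by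
  obtain ⟨b, hb⟩ := exists_forall_lt_measure_image_setOf_forall_lt_le hc
  refine ⟨Iic b, isCompact_Iic_of_orderBot b, ?_⟩
  -- The images of the sets cut out by finitely many of the bounds are decreasing but need not be
  -- measurable, so continuity from above is replaced by outer regularity.
  rw [(p '' Iic b).measure_eq_iInf_isOpen ν]
  refine le_iInf₂ fun U hU => le_iInf fun hUo => ?_
  obtain ⟨n, hn⟩ := exists_setOf_forall_lt_le_subset_of_isOpen (hUo.preimage hp)
    (image_subset_iff.1 hU)
  exact (hb n).le.trans (measure_mono (image_subset_iff.2 hn))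

theorem isLUB_measure_image_isCompact_of_analyticSet [ν.OuterRegular] (hG : AnalyticSet G)
    (hπ : Continuous π) :
    IsLUB ((fun K => ν (π '' K)) '' {K | K ⊆ G ∧ IsCompact K}) (ν (π '' G)) := by
  refine ⟨?_, fun a ha => le_of_forall_lt_imp_le_of_dense fun c hc => ?_⟩
  · rintro _ ⟨K, ⟨hKG, -⟩, rfl⟩
    exact measure_mono (image_mono hKG)
  · rw [AnalyticSet] at hG
    rcases hG with rfl | ⟨f, hf, rfl⟩
    · simp at hc
    · rw [← range_comp] at hc
      obtain ⟨K, hK, hcK⟩ := exists_isCompact_le_measure_image_of_lt (hπ.comp hf) hc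
      rw [image_comp] at hcK
      exact hcK.trans (ha ⟨f '' K, ⟨image_subset_range f K, hK.image hf⟩, rfl⟩)

theorem exists_seq_isCompact_iUnion_image_ae_eq_of_analyticSet [T2Space X] [OpensMeasurableSpace X]
    [ν.OuterRegular] (hG : AnalyticSet G) (hπ : Continuous π) (hν : ν (π '' G) ≠ ⊤) :
    ∃ K : ℕ → Set Z, (∀ n, K n ⊆ G) ∧ (∀ n, IsCompact (K n)) ∧
      ⋃ n, π '' K n =ᵐ[ν] π '' G := by
  obtain ⟨u, -, -, hlim, hu⟩ := (isLUB_measure_image_isCompact_of_analyticSet (ν := ν) hG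
    hπ).exists_seq_monotone_tendsto ⟨_, ∅, ⟨empty_subset G, isCompact_empty⟩, rfl⟩
  choose K hK hKu using hu
  refine ⟨K, fun n => (hK n).1, fun n => (hK n).2, ?_⟩
  refine ae_eq_of_subset_of_measure_ge (iUnion_subset fun n => image_mono (hK n).1) ?_ ?_ hν
  · exact le_of_tendsto' hlim fun n => hKu n ▸ measure_mono (subset_iUnion (fun n => π '' K n) n)
  · exact (MeasurableSet.iUnion fun n => ((hK n).2.image hπ).measurableSet).nullMeasurableSet

end Capacitability

section CompactSelection

variable {X Y : Type*} [TopologicalSpace X] [TopologicalSpace Y] {C : Set (X × Y)}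

theorem isCompact_preimage_prodMk [T1Space X] (hC : IsCompact C) (x : X) :
    IsCompact (Prod.mk x ⁻¹' C) := by
  refine IsClosedEmbedding.isCompact_preimage ⟨isEmbedding_prodMkRight x, ?_⟩ hC
  rw [← image_univ, ← singleton_prod]
  exact isClosed_singleton.prod isClosed_univ

variable [ConditionallyCompleteLinearOrder Y] [OrderTopology Y]

theorem prodMk_sInf_preimage_prodMk_mem [T1Space X] (hC : IsCompact C) {x : X}
    (hx : ∃ y, (x, y) ∈ C) : (x, sInf (Prod.mk x ⁻¹' C)) ∈ C :=
  (isCompact_preimage_prodMk hC x).sInf_mem hx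

theorem measurable_sInf_preimage_prodMk [T2Space X] [MeasurableSpace X] [OpensMeasurableSpace X]
    [SecondCountableTopology Y] [MeasurableSpace Y] [BorelSpace Y] (hC : IsCompact C) :
    Measurable fun x => sInf (Prod.mk x ⁻¹' C) := by
  refine measurable_of_Iic fun c => ?_
  have hproj : MeasurableSet (Prod.fst '' C) := (hC.image continuous_fst).measurableSet
  have hprojIic : MeasurableSet (Prod.fst '' (C ∩ Prod.snd ⁻¹' Iic c)) :=
    ((hC.inter_right (isClosed_Iic.preimage continuous_snd)).image continuous_fst).measurableSet
  -- Off the projection of `C` the fiber is empty and its infimum is the constant `sInf ∅`.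
  have hpreimage : (fun x => sInf (Prod.mk x ⁻¹' C)) ⁻¹' Iic c =
      Prod.fst '' (C ∩ Prod.snd ⁻¹' Iic c) ∪ (Prod.fst '' C)ᶜ ∩ {_x | sInf (∅ : Set Y) ≤ c} := by
    ext x
    by_cases hx : ∃ y, (x, y) ∈ C
    · have hle : sInf (Prod.mk x ⁻¹' C) ≤ c ↔ ∃ y, (x, y) ∈ C ∧ y ≤ c :=
        ⟨fun h => ⟨_, prodMk_sInf_preimage_prodMk_mem hC hx, h⟩, fun ⟨_, hy, hyc⟩ =>
          (csInf_le (isCompact_preimage_prodMk hC x).bddBelow hy).trans hyc⟩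
      simp [hle, hx]
    · have hempty : Prod.mk x ⁻¹' C = ∅ := eq_empty_of_forall_notMem fun y hy => hx ⟨y, hy⟩
      have hnot (y : Y) : (x, y) ∉ C := fun hy => hx ⟨y, hy⟩
      simp [hempty, hnot]
  rw [hpreimage]
  exact hprojIic.union (hproj.compl.inter (MeasurableSet.const _))

end CompactSelection

section MeasurableSelection

theorem exists_measurable_forall_exists_mem_eq {α β : Type*} [MeasurableSpace α]
    [MeasurableSpace β] {A : ℕ → Set α} (hA : ∀ n, MeasurableSet (A n)) {h : ℕ → α → β}
    (hh : ∀ n, Measurable (h n)) :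
    ∃ g : α → β, Measurable g ∧ ∀ x ∈ ⋃ n, A n, ∃ n, x ∈ A n ∧ g x = h n x := by
  obtain ⟨g, hg, hgh⟩ := exists_measurable_piecewise (disjointed A)
    (fun n => MeasurableSet.disjointed hA n) h hh fun i j hij x hx =>
      (disjoint_left.1 (disjoint_disjointed A hij) hx.1 hx.2).elim
  refine ⟨g, hg, fun x hx => ?_⟩
  rw [← iUnion_disjointed, mem_iUnion] at hx
  obtain ⟨n, hn⟩ := hx
  exact ⟨n, disjointed_subset A n hn, hgh n hn⟩

theorem exists_measurable_ae_mem_of_analyticSet {X Y : Type*} [TopologicalSpace X] [T2Space X]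
    [MeasurableSpace X] [OpensMeasurableSpace X] [TopologicalSpace Y]
    [ConditionallyCompleteLinearOrder Y] [OrderTopology Y] [SecondCountableTopology Y]
    [MeasurableSpace Y] [BorelSpace Y] {ν : Measure X} [ν.OuterRegular] {G : Set (X × Y)}
    (hG : AnalyticSet G) (hν : ν (Prod.fst '' G) ≠ ⊤) :
    ∃ g : X → Y, Measurable g ∧ ∀ᵐ x ∂ν, (∃ y, (x, y) ∈ G) → (x, g x) ∈ G := by
  obtain ⟨K, hKG, hK, hae⟩ :=
    exists_seq_isCompact_iUnion_image_ae_eq_of_analyticSet hG continuous_fst hν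
  obtain ⟨g, hg, hgK⟩ := exists_measurable_forall_exists_mem_eq
    (fun n => ((hK n).image continuous_fst).measurableSet)
    (fun n => measurable_sInf_preimage_prodMk (hK n))
  refine ⟨g, hg, hae.mem_iff.mono ?_⟩
  rintro x hx ⟨y, hy⟩
  obtain ⟨n, ⟨⟨_, z⟩, hz, rfl⟩, hgx⟩ := hgK x (hx.2 ⟨(x, y), hy, rfl⟩)
  exact hgx ▸ hKG n (prodMk_sInf_preimage_prodMk_mem (hK n) ⟨z, hz⟩)

theorem exists_measurable_ae_mem_of_standardBorelSpace {X S : Type*} [MeasurableSpace X]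
    [StandardBorelSpace X] [MeasurableSpace S] [StandardBorelSpace S] [Nonempty S]
    (ν : Measure X) [IsFiniteMeasure ν] {G : Set (X × S)} (hG : MeasurableSet G) :
    ∃ g : X → S, Measurable g ∧ ∀ᵐ x ∂ν, (∃ s, (x, s) ∈ G) → (x, g x) ∈ G := by
  let := upgradeStandardBorel X
  let e := embeddingReal S
  have he : MeasurableEmbedding e := measurableEmbedding_embeddingReal S
  have hGe : MeasurableSet (Prod.map id e '' G) :=
    (MeasurableEmbedding.id.prodMap he).measurableSet_image.2 hG
  obtain ⟨r, hr, hre⟩ := he.exists_measurable_extend measurable_id fun _ => ‹Nonempty S›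
  obtain ⟨g, hg, hgG⟩ :=
    exists_measurable_ae_mem_of_analyticSet hGe.analyticSet (measure_ne_top ν _)
  refine ⟨r ∘ g, hr.comp hg, hgG.mono ?_⟩
  rintro x hx ⟨s, hs⟩
  obtain ⟨⟨x', s'⟩, hs', heq⟩ := hx ⟨e s, (x, s), hs, rfl⟩
  obtain ⟨rfl, hes⟩ := Prod.mk.inj heq
  have hrs : r (g x') = s' := hes ▸ congrFun hre s'
  simpa only [Function.comp_apply, id_eq, hrs] using hs'

theorem stmt2_general {T S : Type*} [MeasurableSpace T] (μ : Measure T) [SFinite μ]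
    [MeasurableSpace S] [StandardBorelSpace S] [Nonempty (T → S)] {G : Set (T × S)}
    (hG : MeasurableSet G) :
    ∃ g : T → S, Measurable g ∧ ∀ᵐ t ∂μ, (∃ s, (t, s) ∈ G) → (t, g t) ∈ G := by
  rcases nonempty_fun.1 ‹Nonempty (T → S)› with _ | _
  · exact ⟨isEmptyElim, measurable_of_empty _, ae_of_all _ isEmptyElim⟩
  obtain ⟨φ, hφ, G', hG', rfl⟩ := exists_measurable_nat_bool_preimage_prodMap_eq hG
  obtain ⟨g, hg, hgG'⟩ :=
    exists_measurable_ae_mem_of_standardBorelSpace (μ.toFinite.map φ) hG'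
  refine ⟨g ∘ φ, hg.comp hφ, ?_⟩
  rw [← ae_toFinite (μ := μ)]
  exact ae_of_ae_map hφ.aemeasurable hgG'

end MeasurableSelection

/-- Measurable Choice Theorem (Aumann): if `G ⊆ T × S` is measurable, `S` is a
standard Borel space, `(T, μ)` is σ-finite, and the projection of `G` to `T` is
all of `T`, then there is a measurable selection `g : T → S` with
`(t, g t) ∈ G` for `μ`-almost every `t`. -/
theorem stmt2
    {T : Type*} [MeasurableSpace T] (μ : Measure T) [SigmaFinite μ]
    {S : Type*} [MeasurableSpace S] [StandardBorelSpace S]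
    (G : Set (T × S)) (hG : MeasurableSet G)
    (hproj : ∀ t : T, ∃ s : S, (t, s) ∈ G) :
    ∃ g : T → S, Measurable g ∧ ∀ᵐ t ∂μ, (t, g t) ∈ G := by
  have : Nonempty (T → S) := ⟨fun t => (hproj t).choose⟩
  obtain ⟨g, hg, hgG⟩ := stmt2_general μ hG
  exact ⟨g, hg, hgG.mono fun t ht => ht (hproj t)⟩
end

section
/- Let A : ℝ^d → ℝ^d be a linear automorphism such that for every nonzero v ∈ ℝ^d the set {‖A^n v‖ : n ∈ ℤ} is unbounded. Let f : ℝ^d → ℝ^d be a bijection and h : ℝ^d → ℝ^d a map with A ∘ h = h ∘ f and sup_{x∈ℝ^d} ‖h(x) − x‖ ≤ K < ∞. Then for every constant Ω ≥ 2K and every x ∈ ℝ^d, the fiber of h through x equals the intersection of pulled-back balls along the orbit: h⁻¹({h(x)}) = ⋂_{n∈ℤ} f^{−n}( B̄(f^n(x), Ω) ), where B̄(c, Ω) denotes the closed ball of radius Ω centered at c. In particular, h is injective at x (the fiber h⁻¹({h(x)}) is the singleton {x}) if and only if {x} = ⋂_{n∈ℤ} f^{−n}( B̄(f^n(x), Ω)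 ). -/
/-! Because `h` carries orbits of `f` to orbits of `A`, two points of one fiber of `h` keep their
images under `f ^ n` in one fiber, and a fiber has diameter at most `2 * K` because `h` moves points
by at most `K`. Conversely, if the `f`-orbits of `x` and `y` stay `Ω`-close, the `A`-orbits of `h x`
and `h y` stay `(Ω + 2 * K)`-close, which forces `h x = h y` because `A` drives the orbits of
distinct points unboundedly far apart. -/

open Function Metric Set

section Dynamics

variable {ι X Y : Type*} [PseudoMetricSpace X] [PseudoMetricSpace Y]

/-- The dynamical (infinite Bowen) ball: the points whose trajectory under the family `F` stays
within `r` of the trajectory of `x`. The bi-infinite orbit of a bijection `f` is encoded as the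
family `fun n : ℤ ↦ f ^ n`. -/
def dynamicalBall (F : ι → X → X) (x : X) (r : ℝ) : Set X :=
  ⋂ i, F i ⁻¹' closedBall (F i x) r

/-- Infinite expansivity of a family of self-maps: the trajectories of two distinct points are at
unbounded distance. It is the metric form of the unboundedness of all nonzero orbits of a linear
map. -/
def IsInfinitelyExpansive (G : ι → Y → Y) : Prop :=
  ∀ y z, y ≠ z → ¬ BddAbove (range fun i ↦ dist (G i y) (G i z))

theorem mem_dynamicalBall {F : ι → X → X} {x y : X} {r : ℝ} :
    y ∈ dynamicalBall F x r ↔ ∀ i, dist (F i y) (F i x) ≤ r := by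
  simp only [dynamicalBall, mem_iInter, mem_preimage, mem_closedBall]

theorem IsInfinitelyExpansive.eq_of_forall_dist_le {G : ι → Y → Y} (hG : IsInfinitelyExpansive G)
    {y z : Y} {C : ℝ} (hC : ∀ i, dist (G i y) (G i z) ≤ C) : y = z :=
  by_contra fun hne ↦ hG y z hne ⟨C, forall_mem_range.2 hC⟩

theorem fiber_subset_dynamicalBall {Z : Type*} {F : ι → X → X} {G : ι → Z → Z} {h : X → Z} {r : ℝ}
    (hsemi : ∀ i, Semiconj h (F i) (G i)) (hfiber : ∀ x y, h x = h y → dist x y ≤ r) (x : X) :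
    h ⁻¹' {h x} ⊆ dynamicalBall F x r := by
  intro y (hy : h y = h x)
  refine mem_dynamicalBall.2 fun i ↦ hfiber _ _ ?_
  rw [hsemi i y, hsemi i x, hy]

theorem dynamicalBall_subset_fiber {F : ι → X → X} {G : ι → Y → Y} {h : X → Y} {r C : ℝ}
    (hG : IsInfinitelyExpansive G) (hsemi : ∀ i, Semiconj h (F i) (G i))
    (hcoarse : ∀ x y, dist x y ≤ r → dist (h x) (h y) ≤ C) (x : X) :
    dynamicalBall F x r ⊆ h ⁻¹' {h x} := by
  intro y hy
  refine hG.eq_of_forall_dist_le (C := C) fun i ↦ ?_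
  rw [← hsemi i y, ← hsemi i x]
  exact hcoarse _ _ (mem_dynamicalBall.1 hy i)

end Dynamics

theorem semiconj_zpow {X Y : Type*} {f : Equiv.Perm X} {g : Equiv.Perm Y} {h : X → Y}
    (hsemi : Semiconj h f g) (n : ℤ) : Semiconj h ⇑(f ^ n) ⇑(g ^ n) := by
  have semiconj_pow (m : ℕ) : Semiconj h ⇑(f ^ m) ⇑(g ^ m) := by
    simpa only [Equiv.Perm.iterate_eq_pow] using hsemi.iterate_right m
  obtain ⟨m, rfl | rfl⟩ := n.eq_nat_or_neg
  · simpa only [zpow_natCast] using semiconj_pow m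
  · simp only [zpow_neg, zpow_natCast]
    exact (semiconj_pow m).inverses_right (f ^ m).right_inv (g ^ m).left_inv

theorem isInfinitelyExpansive_zpow_toPerm {G E : Type*} [Group G] [SeminormedAddCommGroup E]
    [DistribMulAction G E] {g : G}
    (hg : ∀ v : E, v ≠ 0 → ¬ BddAbove (range fun n : ℤ ↦ ‖g ^ n • v‖)) :
    IsInfinitelyExpansive fun n : ℤ ↦ ⇑(MulAction.toPerm g ^ n : Equiv.Perm E) := by
  intro y z hne
  have dist_zpow (n : ℤ) : dist ((MulAction.toPerm g ^ n : Equiv.Perm E) y)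
      ((MulAction.toPerm g ^ n : Equiv.Perm E) z) = ‖g ^ n • (y - z)‖ := by
    rw [← MulAction.toPermHom_apply, ← map_zpow, MulAction.toPermHom_apply, MulAction.toPerm_apply,
      MulAction.toPerm_apply, dist_eq_norm, smul_sub]
  simpa only [dist_zpow] using hg (y - z) (sub_ne_zero.2 hne)

section BoundedDisplacement

variable {X : Type*} [PseudoMetricSpace X] {h : X → X} {K : ℝ}

theorem dist_le_two_mul_of_apply_eq (hK : ∀ x, dist (h x) x ≤ K) {x y : X} (hxy : h x = h y) :
    dist x y ≤ 2 * K := by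
  calc dist x y ≤ dist (h x) x + dist (h x) y := dist_triangle_left x y (h x)
    _ = dist (h x) x + dist (h y) y := by rw [hxy]
    _ ≤ 2 * K := by linarith [hK x, hK y]

theorem dist_apply_le_dist_add_two_mul (hK : ∀ x, dist (h x) x ≤ K) (x y : X) :
    dist (h x) (h y) ≤ dist x y + 2 * K := by
  calc dist (h x) (h y) ≤ dist (h x) x + dist x y + dist y (h y) := dist_triangle4 _ _ _ _
    _ = dist (h x) x + dist x y + dist (h y) y := by rw [dist_comm y]
    _ ≤ dist x y + 2 * K := by linarith [hK x, hK y]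

end BoundedDisplacement

theorem stmt7_general {X Y : Type*} [PseudoMetricSpace X] [PseudoMetricSpace Y]
    {f : Equiv.Perm X} {A : Equiv.Perm Y} {h : X → Y} {r C : ℝ}
    (hA : IsInfinitelyExpansive fun n : ℤ ↦ ⇑(A ^ n)) (hsemi : Semiconj h f A)
    (hfiber : ∀ x y, h x = h y → dist x y ≤ r)
    (hcoarse : ∀ x y, dist x y ≤ r → dist (h x) (h y) ≤ C) (x : X) :
    h ⁻¹' {h x} = dynamicalBall (fun n : ℤ ↦ ⇑(f ^ n)) x r ∧
      (h ⁻¹' {h x} = {x} ↔ {x} = dynamicalBall (fun n : ℤ ↦ ⇑(f ^ n)) x r) := by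
  have fiber_eq : h ⁻¹' {h x} = dynamicalBall (fun n : ℤ ↦ ⇑(f ^ n)) x r :=
    (fiber_subset_dynamicalBall (semiconj_zpow hsemi) hfiber x).antisymm
      (dynamicalBall_subset_fiber hA (semiconj_zpow hsemi) hcoarse x)
  exact ⟨fiber_eq, by rw [← fiber_eq, eq_comm]⟩

/-- Characterization of the fibers of the semi-conjugacy: under the same
hypotheses as the previous statement, for every `Ω ≥ 2K` the fiber of `h`
through `x` is the intersection over `n ∈ ℤ` of the preimages under `f^n` of
the closed balls of radius `Ω` around the orbit points `f^n x`; in particular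
`h` is injective at `x` iff this intersection is the singleton `{x}`. -/
theorem stmt7 {d : ℕ}
    (A : EuclideanSpace ℝ (Fin d) ≃ₗ[ℝ] EuclideanSpace ℝ (Fin d))
    (hAhyp : ∀ v : EuclideanSpace ℝ (Fin d), v ≠ 0 →
      ¬ BddAbove (Set.range fun n : ℤ => ‖(A ^ n) v‖))
    (f : Equiv.Perm (EuclideanSpace ℝ (Fin d)))
    (h : EuclideanSpace ℝ (Fin d) → EuclideanSpace ℝ (Fin d))
    (hsemi : ∀ x, A (h x) = h (f x))
    (K : ℝ) (hK : ∀ x, ‖h x - x‖ ≤ K)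
    (Ω : ℝ) (hΩ : 2 * K ≤ Ω) :
    ∀ x : EuclideanSpace ℝ (Fin d),
      (h ⁻¹' {h x} = ⋂ n : ℤ, (f ^ n) ⁻¹' (Metric.closedBall ((f ^ n) x) Ω)) ∧
      ((h ⁻¹' {h x} = {x}) ↔
        ({x} : Set (EuclideanSpace ℝ (Fin d))) =
          ⋂ n : ℤ, (f ^ n) ⁻¹' (Metric.closedBall ((f ^ n) x) Ω)) := by
  simp only [← dist_eq_norm] at hK
  have expansive := isInfinitelyExpansive_zpow_toPerm (g := A) hAhyp
  exact stmt7_general expansive (fun x ↦ (hsemi x).symm)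
    (fun _ _ hxy ↦ (dist_le_two_mul_of_apply_eq hK hxy).trans hΩ)
    (fun x y hxy ↦ (dist_apply_le_dist_add_two_mul hK x y).trans (add_le_add_left hxy _))
end
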